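/- Let ℓ be a prime, k ≥ 1 an integer, let M = (ℤ/ℓ^{k+1}ℤ)² be the free module of rank 2 over ℤ/ℓ^{k+1}ℤ, and let G be a subgroup of GL₂(ℤ/ℓ^{k+1}ℤ) acting naturally on M. If the fixed-point subgroup M^G = {m ∈ M : g·m = m for all g ∈ G} has a cyclic direct summand of order ℓ^k, then there exists g ∈ G such that the fixed-point subgroup M^{⟨g⟩} = {m ∈ M : g·m = m} has a cyclic direct summand of order ℓ^k. -/

import Mathlib

/-- An abelian group `A` has a cyclic direct summand of order `n` if there are an element
`x ∈ A` of order `n` and a subgroup `H ≤ A` such that `A` is the internal direct sum of the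
cyclic subgroup generated by `x` and `H`. -/
def HasCyclicSummand (A : Type*) [AddCommGroup A] (n : ℕ) : Prop :=
  ∃ x : A, addOrderOf x = n ∧ ∃ H : AddSubgroup A, IsCompl (AddSubgroup.zmultiples x) H

/-- The additive subgroup of vectors in `R²` fixed by every element of a set `S` of invertible
`2×2` matrices over `R`, acting by matrix-vector multiplication. -/
def fixedVectors {R : Type*} [CommRing R] (S : Set (GL (Fin 2) R)) :
    AddSubgroup (Fin 2 → R) where
  carrier := {m | ∀ g ∈ S, Matrix.mulVec (g : Matrix (Fin 2) (Fin 2) R) m = m}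
  zero_mem' := fun g _ => Matrix.mulVec_zero _
  add_mem' {a b} ha hb := fun g hg => by
    rw [Matrix.mulVec_add, ha g hg, hb g hg]
  neg_mem' {a} ha := fun g hg => by
    rw [Matrix.mulVec_neg, ha g hg]

/-!
If the fixed vectors of `g ∈ G` have no unit coordinate, they form a group of exponent dividing
`ℓ ^ k`, in which an element of order `ℓ ^ k` splits off. Otherwise `g` fixes a vector with a unit
coordinate, so `det (g - 1) = 0` and `g ^ n - 1 = (∑ i < n, det g ^ i) (g - 1)`. If moreover
`g ≠ 1` and `det g ≡ 1` modulo `ℓ` (modulo `4` when `ℓ = 2`), then `g ^ ℓ ^ p - 1` is a unit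
multiple of `ℓ ^ p (g - 1)`, so some power `h ≠ 1` of `g` satisfies `ℓ (h - 1) = 0`, and the fixed
vectors of such an `h` are isomorphic to `ℤ/ℓ ^ (k + 1) × ℤ/ℓ ^ k`. If no `g ≠ 1` in `G` has
`det g ≡ 1`, the determinant embeds `G` into the cyclic group of units modulo `ℓ` (or `4`), so `G`
is cyclic and a generator has the same fixed vectors as `G`.
-/

open Matrix

lemma HasCyclicSummand.of_addMonoidHom {A B : Type*} [AddCommGroup A] [AddCommGroup B]
    (f : A →+ B) {x : A} (hx : addOrderOf (f x) = addOrderOf x)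
    (hf : ∀ a, f a ∈ AddSubgroup.zmultiples (f x)) : HasCyclicSummand A (addOrderOf x) := by
  refine ⟨x, rfl, f.ker, ?_, ?_⟩
  · rw [AddSubgroup.disjoint_def]
    rintro _ ⟨j, rfl⟩ hj
    rwa [AddMonoidHom.mem_ker, map_zsmul, ← addOrderOf_dvd_iff_zsmul_eq_zero, hx,
      addOrderOf_dvd_iff_zsmul_eq_zero] at hj
  · rw [codisjoint_iff, AddSubgroup.eq_top_iff']
    intro a
    obtain ⟨j, hj⟩ := hf a
    refine AddSubgroup.mem_sup.mpr ⟨j • x, ⟨j, rfl⟩, a - j • x, ?_, add_sub_cancel _ _⟩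
    rw [AddMonoidHom.mem_ker, map_sub, map_zsmul, sub_eq_zero]
    exact hj.symm

lemma HasCyclicSummand.of_linearMap {N d : ℕ} {M : Type*} [AddCommGroup M] [Module (ZMod N) M]
    {A : AddSubgroup M} (φ : M →ₗ[ZMod N] ZMod N) {y : M} (hφy : φ y = 1)
    (hy : (d : ZMod N) • y ∈ A) (hA : ∀ a ∈ A, (d : ZMod N) ∣ φ a) :
    HasCyclicSummand A (addOrderOf (d : ZMod N)) := by
  let f : A →+ ZMod N := φ.toAddMonoidHom.comp A.subtype
  let x : A := ⟨(d : ZMod N) • y, hy⟩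
  have hfx : f x = d := by
    change φ ((d : ZMod N) • y) = d
    rw [map_smul, hφy, smul_eq_mul, mul_one]
  have hx : addOrderOf (d : ZMod N) = addOrderOf x := by
    refine addOrderOf_eq_addOrderOf_iff.mpr fun j => ⟨fun hj => Subtype.ext ?_, fun hj => ?_⟩
    · change j • (d : ZMod N) • y = 0
      rw [← smul_assoc, hj, zero_smul]
    · rw [← hfx, ← map_nsmul, hj, map_zero]
  rw [hx]
  refine .of_addMonoidHom f (by rw [hfx, hx]) fun a => ?_
  obtain ⟨c, hc⟩ := hA a a.2
  obtain ⟨j, rfl⟩ := ZMod.intCast_surjective c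
  exact ⟨j, by rw [hfx]; exact (zsmul_eq_mul' _ _).trans hc.symm⟩

section PrimePower

variable {ℓ : ℕ}

lemma natCast_dvd_of_not_isUnit (hℓ : ℓ.Prime) {n : ℕ} {a : ZMod (ℓ ^ n)} (ha : ¬ IsUnit a) :
    (ℓ : ZMod (ℓ ^ n)) ∣ a := by
  have : NeZero (ℓ ^ n) := ⟨pow_ne_zero _ hℓ.ne_zero⟩
  rw [← ZMod.natCast_zmod_val a] at ha ⊢
  rw [ZMod.isUnit_iff_coprime] at ha
  refine Nat.cast_dvd_cast (by_contra fun h => ha ?_)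
  exact ((hℓ.coprime_iff_not_dvd.mpr h).pow_left n).symm

lemma natCast_self_pow_eq_zero (ℓ n : ℕ) : (ℓ : ZMod (ℓ ^ n)) ^ n = 0 := by
  rw [← Nat.cast_pow, ZMod.natCast_self]

lemma addOrderOf_natCast_self (hℓ : 0 < ℓ) (k : ℕ) :
    addOrderOf (ℓ : ZMod (ℓ ^ (k + 1))) = ℓ ^ k := by
  rw [ZMod.addOrderOf_coe _ (pow_ne_zero _ hℓ.ne'),
    Nat.gcd_eq_right (dvd_pow_self ℓ k.succ_ne_zero), pow_succ, Nat.mul_div_cancel _ hℓ]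

lemma exists_eq_smul_of_forall_not_isUnit (hℓ : ℓ.Prime) {n : ℕ} {ι : Type*}
    {v : ι → ZMod (ℓ ^ n)} (hv : ∀ i, ¬ IsUnit (v i)) :
    ∃ z : ι → ZMod (ℓ ^ n), v = (ℓ : ZMod (ℓ ^ n)) • z := by
  choose z hz using fun i => natCast_dvd_of_not_isUnit hℓ (hv i)
  exact ⟨z, funext hz⟩

lemma hasCyclicSummand_of_forall_not_isUnit (hℓ : ℓ.Prime) {k : ℕ} (hk : 1 ≤ k) {ι : Type*}
    {A : AddSubgroup (ι → ZMod (ℓ ^ (k + 1)))} (hA : ∀ a ∈ A, ∀ i, ¬ IsUnit (a i))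
    {x : ι → ZMod (ℓ ^ (k + 1))} (hxA : x ∈ A) (hx : addOrderOf x = ℓ ^ k) :
    HasCyclicSummand A (ℓ ^ k) := by
  obtain ⟨y, rfl⟩ := exists_eq_smul_of_forall_not_isUnit hℓ (hA x hxA)
  obtain ⟨i, hi⟩ : ∃ i, IsUnit (y i) := by
    by_contra! hy
    obtain ⟨z, rfl⟩ := exists_eq_smul_of_forall_not_isUnit hℓ hy
    have hdvd : ℓ ^ k ∣ ℓ ^ (k - 1) := by
      rw [← hx, addOrderOf_dvd_iff_nsmul_eq_zero, ← Nat.cast_smul_eq_nsmul (ZMod (ℓ ^ (k + 1))),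
        smul_smul, smul_smul, Nat.cast_pow, ← pow_succ, ← pow_succ, Nat.sub_add_cancel hk,
        natCast_self_pow_eq_zero, zero_smul]
    have := (Nat.pow_dvd_pow_iff_le_right hℓ.one_lt).mp hdvd
    omega
  obtain ⟨c, hc⟩ := hi.exists_left_inv
  rw [← addOrderOf_natCast_self hℓ.pos k]
  refine .of_linearMap (c • LinearMap.proj i) hc hxA fun a ha => ?_
  obtain ⟨b, rfl⟩ := exists_eq_smul_of_forall_not_isUnit hℓ (hA a ha)
  rw [map_smul]
  exact dvd_mul_right _ _

end PrimePower

section Matrices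

variable {R : Type*} [CommRing R]

lemma eq_zero_of_mulVec_eq_zero_of_isUnit_det {N : Matrix (Fin 2) (Fin 2) R} {v w : Fin 2 → R}
    (hv : N *ᵥ v = 0) (hw : N *ᵥ w = 0) (hvw : IsUnit (v 0 * w 1 - v 1 * w 0)) : N = 0 := by
  have hB : IsUnit (of ![v, w])ᵀ := by
    rw [isUnit_iff_isUnit_det, det_transpose, det_fin_two]
    exact hvw
  refine hB.mul_left_eq_zero.mp ?_
  ext i j
  fin_cases j
  · exact congrFun hv i
  · exact congrFun hw i

lemma det_eq_zero_of_mulVec_eq_zero {n : Type*} [Fintype n] [DecidableEq n] {N : Matrix n n R}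
    {w : n → R} (hw : N *ᵥ w = 0) {i : n} (hi : IsUnit (w i)) : N.det = 0 := by
  have h : N.det • w = 0 := by
    rw [← one_mulVec w, ← smul_mulVec, ← adjugate_mul, ← mulVec_mulVec, hw, mulVec_zero]
  exact hi.mul_left_eq_zero.mp (congrFun h i)

-- Cayley-Hamilton gives `g * (g - 1) - g.det • (g - 1) = -(g - 1).det • g`.
lemma mul_sub_one_of_det_sub_one_eq_zero {g : Matrix (Fin 2) (Fin 2) R} (hg : (g - 1).det = 0) :
    g * (g - 1) = g.det • (g - 1) := by
  have hg' : (g 0 0 - 1) * (g 1 1 - 1) - g 0 1 * g 1 0 = 0 := by simpa [det_fin_two] using hg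
  ext i j
  fin_cases i <;> fin_cases j <;>
    simp only [Fin.zero_eta, Fin.mk_one, mul_apply, Matrix.sub_apply, Matrix.smul_apply,
      Fin.sum_univ_two, one_apply_eq, ne_eq, zero_ne_one, one_ne_zero, not_false_eq_true,
      one_apply_ne, sub_zero, det_fin_two, smul_eq_mul]
  · linear_combination -g 0 0 * hg'
  · linear_combination -g 0 1 * hg'
  · linear_combination -g 1 0 * hg'
  · linear_combination -g 1 1 * hg'

lemma pow_sub_one_eq_geom_sum_smul {g : Matrix (Fin 2) (Fin 2) R} (hg : (g - 1).det = 0) (n : ℕ) :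
    g ^ n - 1 = (∑ i ∈ Finset.range n, g.det ^ i) • (g - 1) := by
  have hpow (i : ℕ) : g ^ i * (g - 1) = g.det ^ i • (g - 1) := by
    induction i with
    | zero => simp
    | succ i ih =>
      rw [pow_succ, mul_assoc, mul_sub_one_of_det_sub_one_eq_zero hg, mul_smul_comm, ih, smul_smul,
        ← pow_succ']
  rw [← geom_sum_mul, Finset.sum_mul, Finset.sum_smul]
  exact Finset.sum_congr rfl fun i _ => hpow i

/-- The least power `q` of a prime `ℓ` such that the units of `ℤ_ℓ` congruent to `1` modulo `q` are
torsion free: `4` if `ℓ = 2`, and `ℓ` otherwise. It is the modulus to which determinants are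
reduced. -/
def torsionFreeLevel (ℓ : ℕ) : ℕ := if ℓ = 2 then 4 else ℓ

lemma isCyclic_units_zmod_torsionFreeLevel {ℓ : ℕ} (hℓ : ℓ.Prime) :
    IsCyclic (ZMod (torsionFreeLevel ℓ))ˣ := by
  by_cases h : ℓ = 2
  · rw [torsionFreeLevel, if_pos h]
    exact ZMod.isCyclic_units_four
  · rw [torsionFreeLevel, if_neg h]
    exact ZMod.isCyclic_units_prime hℓ

lemma torsionFreeLevel_dvd_pow {ℓ n : ℕ} (hn : 2 ≤ n) : torsionFreeLevel ℓ ∣ ℓ ^ n := by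
  unfold torsionFreeLevel
  split_ifs with h
  · exact h ▸ pow_dvd_pow 2 hn
  · exact dvd_pow_self ℓ (by omega)

lemma exists_isUnit_geom_sum_eq_mul {ℓ : ℕ} (hℓ : ℓ.Prime) (hnil : IsNilpotent (ℓ : R)) {d : R}
    (hd : (torsionFreeLevel ℓ : R) ∣ d - 1) :
    ∃ u, IsUnit u ∧ ∑ i ∈ Finset.range ℓ, d ^ i = ℓ * u := by
  suffices ∃ y, ∑ i ∈ Finset.range ℓ, d ^ i = ℓ * (1 + ℓ * y) by
    obtain ⟨y, hy⟩ := this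
    exact ⟨_, ((Commute.all _ y).isNilpotent_mul_right hnil).isUnit_one_add, hy⟩
  obtain ⟨c, hc⟩ := hd
  obtain rfl : d = 1 + torsionFreeLevel ℓ * c := by rw [← hc, add_sub_cancel]
  rcases hℓ.eq_two_or_odd' with rfl | hodd
  · refine ⟨c, ?_⟩
    rw [torsionFreeLevel, if_pos rfl, Finset.sum_range_succ, Finset.sum_range_one]
    push_cast
    ring
  · obtain ⟨y, hy⟩ := odd_sq_dvd_geom_sum₂_sub (a := (1 : R)) (b := c) hodd
    have hlevel : torsionFreeLevel ℓ = ℓ := if_neg (by rintro rfl; exact absurd hodd (by decide))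
    simp only [one_pow, mul_one] at hy
    exact ⟨y, by rw [hlevel]; linear_combination hy⟩

lemma exists_isUnit_pow_pow_sub_one_eq_smul {ℓ : ℕ} (hℓ : ℓ.Prime) (hnil : IsNilpotent (ℓ : R))
    {g : Matrix (Fin 2) (Fin 2) R} (hg : (g - 1).det = 0)
    (hdet : (torsionFreeLevel ℓ : R) ∣ g.det - 1) (p : ℕ) :
    ∃ u : R, IsUnit u ∧ g ^ ℓ ^ p - 1 = u • (ℓ : R) ^ p • (g - 1) := by
  induction p with
  | zero => exact ⟨1, isUnit_one, by simp⟩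
  | succ p ih =>
    obtain ⟨u, hu, hgp⟩ := ih
    have hgp_det : (g ^ ℓ ^ p - 1).det = 0 := by rw [hgp, det_smul, det_smul, hg]; simp
    have hgp_level : (torsionFreeLevel ℓ : R) ∣ (g ^ ℓ ^ p).det - 1 := by
      rw [det_pow]
      exact hdet.trans (sub_one_dvd_pow_sub_one _ _)
    obtain ⟨v, hv, hsum⟩ := exists_isUnit_geom_sum_eq_mul hℓ hnil hgp_level
    refine ⟨v * u, hv.mul hu, ?_⟩
    rw [pow_succ ℓ p, pow_mul, pow_sub_one_eq_geom_sum_smul hgp_det, hsum, hgp]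
    module

end Matrices

section FixedVectors

variable {R : Type*} [CommRing R]

lemma fixedVectors_anti {S T : Set (GL (Fin 2) R)} (h : S ⊆ T) :
    fixedVectors T ≤ fixedVectors S :=
  fun _ hm g hg => hm g (h hg)

lemma mem_fixedVectors_singleton {g : GL (Fin 2) R} {m : Fin 2 → R} :
    m ∈ fixedVectors {g} ↔ (g.val - 1) *ᵥ m = 0 := by
  rw [sub_mulVec, one_mulVec, sub_eq_zero]
  exact ⟨fun h => h g rfl, fun h g' hg' => by rwa [Set.mem_singleton_iff.mp hg']⟩

lemma fixedVectors_zpowers (g : GL (Fin 2) R) :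
    fixedVectors (Subgroup.zpowers g : Set (GL (Fin 2) R)) = fixedVectors {g} := by
  refine le_antisymm (fixedVectors_anti (by simp)) fun m hm a ha => ?_
  rw [SetLike.mem_coe, Subgroup.zpowers_eq_closure] at ha
  induction ha using Subgroup.closure_induction with
  | mem a ha => exact hm a ha
  | one => exact one_mulVec m
  | mul a b _ _ ha hb => rw [Units.val_mul, ← mulVec_mulVec, hb, ha]
  | inv a _ ha =>
    conv_lhs => rw [← ha, mulVec_mulVec, ← Units.val_mul, inv_mul_cancel, Units.val_one,
      one_mulVec]

end FixedVectors

section GLTwo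

variable {ℓ k : ℕ} {g : GL (Fin 2) (ZMod (ℓ ^ (k + 1)))} {w x : Fin 2 → ZMod (ℓ ^ (k + 1))}

-- The functional `m ↦ det (w, m)` takes values in `ℓ ℤ/ℓ^{k+1}` on the fixed vectors of `g`,
-- since a fixed vector that together with `w` spans the module would force `g = 1`.
lemma hasCyclicSummand_fixedVectors_of_smul_sub_one_eq_zero (hℓ : ℓ.Prime) (hg : g ≠ 1)
    (hℓg : (ℓ : ZMod (ℓ ^ (k + 1))) • (g.val - 1) = 0)
    (hw : w ∈ fixedVectors {g}) {i : Fin 2} (hi : IsUnit (w i)) :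
    HasCyclicSummand (fixedVectors {g}) (ℓ ^ k) := by
  let φ : (Fin 2 → ZMod (ℓ ^ (k + 1))) →ₗ[ZMod (ℓ ^ (k + 1))] ZMod (ℓ ^ (k + 1)) :=
    w 0 • LinearMap.proj 1 - w 1 • LinearMap.proj 0
  obtain ⟨y, hy⟩ : ∃ y, φ y = 1 := by
    obtain ⟨c, hc⟩ := hi.exists_right_inv
    fin_cases i
    · exact ⟨![0, c], by simpa [φ] using hc⟩
    · exact ⟨![-c, 0], by simpa [φ] using hc⟩
  rw [← addOrderOf_natCast_self hℓ.pos k]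
  refine .of_linearMap φ hy ?_ fun m hm => natCast_dvd_of_not_isUnit hℓ fun hφm =>
    hg (Units.ext (sub_eq_zero.mp ?_))
  · rw [mem_fixedVectors_singleton, mulVec_smul, ← smul_mulVec, hℓg, zero_mulVec]
  · exact eq_zero_of_mulVec_eq_zero_of_isUnit_det (mem_fixedVectors_singleton.mp hw)
      (mem_fixedVectors_singleton.mp hm) hφm

lemma exists_pow_hasCyclicSummand_of_isUnit (hℓ : ℓ.Prime) (hg : g ≠ 1)
    (hdet : (torsionFreeLevel ℓ : ZMod (ℓ ^ (k + 1))) ∣ g.val.det - 1)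
    (hw : w ∈ fixedVectors {g}) {i : Fin 2} (hi : IsUnit (w i)) :
    ∃ n : ℕ, HasCyclicSummand (fixedVectors {g ^ n}) (ℓ ^ k) := by
  have hN_det := det_eq_zero_of_mulVec_eq_zero (mem_fixedVectors_singleton.mp hw) hi
  obtain ⟨p, hp, hp_succ⟩ : ∃ p : ℕ, (ℓ : ZMod (ℓ ^ (k + 1))) ^ p • (g.val - 1) ≠ 0 ∧
      (ℓ : ZMod (ℓ ^ (k + 1))) ^ (p + 1) • (g.val - 1) = 0 := by
    refine Nat.exists_not_and_succ_of_not_zero_of_exists ?_ ⟨k + 1, ?_⟩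
    · rw [pow_zero, one_smul, sub_eq_zero]
      exact fun h => hg (Units.ext h)
    · rw [natCast_self_pow_eq_zero, zero_smul]
  obtain ⟨u, hu, hgp⟩ := exists_isUnit_pow_pow_sub_one_eq_smul hℓ
    ⟨k + 1, natCast_self_pow_eq_zero ℓ (k + 1)⟩ hN_det hdet p
  rw [← Units.val_pow_eq_pow_val] at hgp
  refine ⟨ℓ ^ p, hasCyclicSummand_fixedVectors_of_smul_sub_one_eq_zero hℓ ?_ ?_ ?_ hi⟩
  · intro h
    rw [h, Units.val_one, sub_self, eq_comm, hu.smul_eq_zero] at hgp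
    exact hp hgp
  · rw [hgp, smul_comm, smul_smul (ℓ : ZMod (ℓ ^ (k + 1))), ← pow_succ', hp_succ, smul_zero]
  · rw [← fixedVectors_zpowers] at hw
    exact fixedVectors_anti (by simp) hw

lemma exists_pow_hasCyclicSummand (hℓ : ℓ.Prime) (hk : 1 ≤ k) (hg : g ≠ 1)
    (hdet : (torsionFreeLevel ℓ : ZMod (ℓ ^ (k + 1))) ∣ g.val.det - 1)
    (hx : x ∈ fixedVectors {g}) (hord : addOrderOf x = ℓ ^ k) :
    ∃ n : ℕ, HasCyclicSummand (fixedVectors {g ^ n}) (ℓ ^ k) := by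
  by_cases hw : ∃ w ∈ fixedVectors {g}, ∃ i, IsUnit (w i)
  · obtain ⟨w, hw, i, hi⟩ := hw
    exact exists_pow_hasCyclicSummand_of_isUnit hℓ hg hdet hw hi
  · push Not at hw
    exact ⟨1, by rw [pow_one]; exact hasCyclicSummand_of_forall_not_isUnit hℓ hk hw hx hord⟩

end GLTwo

lemma natCast_dvd_sub_one_of_unitsMap_eq_one {q N : ℕ} (hq : q ∣ N) {d : (ZMod N)ˣ}
    (hd : ZMod.unitsMap hq d = 1) : (q : ZMod N) ∣ d - 1 := by
  have hcast : ZMod.castHom hq (ZMod q) (d - 1) = 0 := by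
    rw [map_sub, map_one, sub_eq_zero]
    exact congrArg Units.val hd
  obtain ⟨a, ha⟩ := ZMod.intCast_surjective ((d : ZMod N) - 1)
  rw [← ha, map_intCast, ZMod.intCast_zmod_eq_zero_iff_dvd] at hcast
  rw [← ha, ← Int.cast_natCast q]
  exact Int.cast_dvd_cast _ _ hcast

/-- Let `ℓ` be a prime, `k ≥ 1`, `M = (ℤ/ℓ^{k+1}ℤ)²`, and
`G ≤ GL₂(ℤ/ℓ^{k+1}ℤ)` acting naturally on `M`. If the fixed-point subgroup `M^G` has a cyclic
direct summand of order `ℓ^k`, then there is `g ∈ G` such that `M^{⟨g⟩}` has a cyclic direct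
summand of order `ℓ^k`. -/
theorem statement19 (ℓ : ℕ) (hℓ : ℓ.Prime) (k : ℕ) (hk : 1 ≤ k)
    (G : Subgroup (GL (Fin 2) (ZMod (ℓ ^ (k + 1)))))
    (h : HasCyclicSummand (fixedVectors (G : Set (GL (Fin 2) (ZMod (ℓ ^ (k + 1)))))) (ℓ ^ k)) :
    ∃ g ∈ G, HasCyclicSummand (fixedVectors {g}) (ℓ ^ k) := by
  obtain ⟨⟨x, hx⟩, hord, -⟩ := id h
  rw [← AddSubgroup.addOrderOf_coe] at hord
  have hq : torsionFreeLevel ℓ ∣ ℓ ^ (k + 1) := torsionFreeLevel_dvd_pow (by omega)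
  let δ : G →* (ZMod (torsionFreeLevel ℓ))ˣ :=
    ((ZMod.unitsMap hq).comp GeneralLinearGroup.det).comp G.subtype
  by_cases hδ : Function.Injective δ
  · have := isCyclic_units_zmod_torsionFreeLevel hℓ
    obtain ⟨g, rfl⟩ := G.isCyclic_iff_exists_zpowers_eq_top.mp (isCyclic_of_injective δ hδ)
    exact ⟨g, Subgroup.mem_zpowers g, by rwa [fixedVectors_zpowers] at h⟩
  · rw [injective_iff_map_eq_one] at hδ
    push Not at hδ
    obtain ⟨⟨g, hgG⟩, hgδ, hg⟩ := hδ
    obtain ⟨n, hn⟩ := exists_pow_hasCyclicSummand hℓ hk (fun h1 => hg (Subtype.ext h1))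
      (natCast_dvd_sub_one_of_unitsMap_eq_one hq hgδ)
      (fixedVectors_anti (Set.singleton_subset_iff.mpr hgG) hx) hord
    exact ⟨g ^ n, pow_mem hgG n, hn⟩
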